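/- Let d ≥ 1 and let f : ℝ^d → ℝ be continuously differentiable with L-Lipschitz gradient. Let x ∈ ℝ^d and let y₁, …, y_m ∈ ℝ^d be points, all distinct from x, with unit directions v_j = (y_j − x)/‖y_j − x‖, slopes s_j = (f(y_j) − f(x))/‖y_j − x‖, and a_j = (L/2)‖y_j − x‖, and let A ∈ ℝ^{m×d} have rows v_jᵀ. Suppose there is σ > 0 with ‖Az‖ ≥ σ‖z‖ for all z ∈ ℝ^d (i.e. the smallest singular value of A is at least σ). Then for any g ∈ ℝ^d, the gradient estimation error satisfies ‖g − ∇f(x)‖ ≤ m(g)/σ, where m(g)² = Σ_{j=1}^{m} (|s_j − gᵀv_j| + a_j)². -/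

import Mathlib

open scoped RealInnerProductSpace

/-! By the first-order Taylor bound `|f y - f x - ⟪∇f x, y - x⟫| ≤ (L / 2) ‖y - x‖²`, dividing by
`‖y - x‖` confines `∇f x` to the polyhedron `P` of all `z` with `|⟪vⱼ, z⟫ - sⱼ| ≤ aⱼ`. For `z ∈ P`
and any `g`, the triangle inequality through `sⱼ` gives `|⟪vⱼ, z - g⟫| ≤ |sⱼ - ⟪g, vⱼ⟫| + aⱼ`;
summing squares, `‖A (z - g)‖ ≤ m(g)`, and the singular value bound turns this into
`‖z - g‖ ≤ m(g) / σ`. -/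

section Taylor

variable {E F : Type*} [NormedAddCommGroup E] [NormedSpace ℝ E]
  [NormedAddCommGroup F] [NormedSpace ℝ F]

theorem hasDerivWithinAt_comp_add_smul_sub {f : E → F} {f' : E →L[ℝ] F} {S : Set E} {x y : E}
    {t : ℝ} (hS : StarConvex ℝ x S) (hy : y ∈ S)
    (hf : HasFDerivWithinAt f f' S (x + t • (y - x))) :
    HasDerivWithinAt (fun r : ℝ ↦ f (x + r • (y - x))) (f' (y - x)) (Set.Icc 0 1) t := by
  have hpath : HasDerivAt (fun r : ℝ ↦ x + r • (y - x)) (y - x) t := by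
    simpa using ((hasDerivAt_id t).smul_const (y - x)).const_add x
  have hmaps : Set.MapsTo (fun r : ℝ ↦ x + r • (y - x)) (Set.Icc 0 1) S :=
    fun r hr ↦ hS.add_smul_sub_mem hy hr.1 hr.2
  exact hf.comp_hasDerivWithinAt t hpath.hasDerivWithinAt hmaps

theorem norm_sub_sub_fderiv_le_of_starConvex {f : E → F} {f' : E → E →L[ℝ] F} {S : Set E} {x y : E}
    {L : ℝ} (hS : StarConvex ℝ x S) (hf : ∀ z ∈ S, HasFDerivWithinAt f (f' z) S z)
    (hLip : ∀ z ∈ S, ‖f' z - f' x‖ ≤ L * ‖z - x‖) (hy : y ∈ S) :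
    ‖f y - f x - f' x (y - x)‖ ≤ L / 2 * ‖y - x‖ ^ 2 := by
  let remainder : ℝ → F := fun t ↦ f (x + t • (y - x)) - f x - t • f' x (y - x)
  have hderiv : ∀ t ∈ Set.Icc (0 : ℝ) 1, HasDerivWithinAt remainder
      ((f' (x + t • (y - x)) - f' x) (y - x)) (Set.Icc 0 1) t := fun t ht ↦
    (((hasDerivWithinAt_comp_add_smul_sub hS hy
      (hf _ (hS.add_smul_sub_mem hy ht.1 ht.2))).sub_const (f x)).sub
      ((hasDerivWithinAt_id t _).smul_const (f' x (y - x)))).congr_deriv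
      (by rw [one_smul, sub_apply])
  have hbound : ∀ t ∈ Set.Ico (0 : ℝ) 1,
      ‖(f' (x + t • (y - x)) - f' x) (y - x)‖ ≤ L * ‖y - x‖ ^ 2 * t := fun t ht ↦
    calc ‖(f' (x + t • (y - x)) - f' x) (y - x)‖
        ≤ ‖f' (x + t • (y - x)) - f' x‖ * ‖y - x‖ := ContinuousLinearMap.le_opNorm _ _
      _ ≤ L * ‖x + t • (y - x) - x‖ * ‖y - x‖ := by
          gcongr
          exact hLip _ (hS.add_smul_sub_mem hy ht.1 ht.2.le)
      _ = L * ‖y - x‖ ^ 2 * t := by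
          rw [add_sub_cancel_left, norm_smul, Real.norm_of_nonneg ht.1]
          ring
  have hmajorant : ∀ t : ℝ,
      HasDerivAt (fun t ↦ L / 2 * ‖y - x‖ ^ 2 * t ^ 2) (L * ‖y - x‖ ^ 2 * t) t := fun t ↦
    ((hasDerivAt_pow 2 t).const_mul (L / 2 * ‖y - x‖ ^ 2)).congr_deriv (by norm_num; ring)
  have hle : ‖remainder 1‖ ≤ L / 2 * ‖y - x‖ ^ 2 * 1 ^ 2 :=
    image_norm_le_of_norm_deriv_right_le_deriv_boundary
      (fun t ht ↦ (hderiv t ht).continuousWithinAt)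
      (fun t ht ↦ (hderiv t (Set.Ico_subset_Icc_self ht)).mono_of_mem_nhdsWithin
        (Icc_mem_nhdsGE_of_mem ht))
      (by simp [remainder]) hmajorant hbound (Set.right_mem_Icc.2 zero_le_one)
  simpa [remainder] using hle

end Taylor

section GradientError

variable {E ι : Type*} [NormedAddCommGroup E] [InnerProductSpace ℝ E]

/-- The polyhedron of all gradients compatible with the slopes `s j` observed in the directions
`v j`, up to the tolerances `a j`. -/
def slopePolyhedron (v : ι → E) (s a : ι → ℝ) : Set E :=
  {z | ∀ j, |⟪v j, z⟫ - s j| ≤ a j}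

/-- The quantity `m(g)`: the Euclidean norm of the slope residuals of a candidate gradient `g`,
each enlarged by its tolerance. -/
noncomputable def slopeResidual [Fintype ι] (v : ι → E) (s a : ι → ℝ) (g : E) : ℝ :=
  √(∑ j, (|s j - ⟪g, v j⟫| + a j) ^ 2)

theorem slopePolyhedron_subset_ellipsoid [Fintype ι] (v : ι → E) (s a : ι → ℝ) (g : E) :
    slopePolyhedron v s a ⊆ {z | √(∑ j, ⟪v j, z - g⟫ ^ 2) ≤ slopeResidual v s a g} := by
  intro z hz
  refine Real.sqrt_le_sqrt (Finset.sum_le_sum fun j _ ↦ ?_)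
  have hj : |⟪v j, z - g⟫| ≤ |s j - ⟪g, v j⟫| + a j :=
    calc |⟪v j, z - g⟫| = |(s j - ⟪g, v j⟫) + (⟪v j, z⟫ - s j)| := by
          rw [inner_sub_right, real_inner_comm (v j) g]
          ring_nf
      _ ≤ |s j - ⟪g, v j⟫| + |⟪v j, z⟫ - s j| := abs_add_le _ _
      _ ≤ |s j - ⟪g, v j⟫| + a j := by gcongr; exact hz j
  exact sq_le_sq.2 (hj.trans (le_abs_self _))

theorem norm_sub_le_slopeResidual_div [Fintype ι] {v : ι → E} {s a : ι → ℝ} {σ : ℝ} (hσ : 0 < σ)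
    (hv : ∀ z, σ * ‖z‖ ≤ √(∑ j, ⟪v j, z⟫ ^ 2)) {z : E} (hz : z ∈ slopePolyhedron v s a) (g : E) :
    ‖g - z‖ ≤ slopeResidual v s a g / σ := by
  rw [le_div_iff₀' hσ, norm_sub_rev]
  exact (hv (z - g)).trans (slopePolyhedron_subset_ellipsoid v s a g hz)

variable [CompleteSpace E] {f : E → ℝ} {f' : E → E} {S : Set E} {x : E} {L : ℝ}

theorem abs_sub_sub_inner_gradient_le_of_starConvex {y : E} (hS : StarConvex ℝ x S)
    (hf : ∀ z ∈ S, HasGradientWithinAt f (f' z) S z)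
    (hLip : ∀ z ∈ S, ‖f' z - f' x‖ ≤ L * ‖z - x‖) (hy : y ∈ S) :
    |f y - f x - ⟪f' x, y - x⟫| ≤ L / 2 * ‖y - x‖ ^ 2 :=
  norm_sub_sub_fderiv_le_of_starConvex (f' := fun z ↦ InnerProductSpace.toDual ℝ E (f' z)) hS
    (fun z hz ↦ (hf z hz).hasFDerivWithinAt)
    (fun z hz ↦ by simpa only [← map_sub, LinearIsometryEquiv.norm_map] using hLip z hz) hy

theorem gradient_mem_slopePolyhedron (hS : StarConvex ℝ x S)
    (hf : ∀ z ∈ S, HasGradientWithinAt f (f' z) S z)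
    (hLip : ∀ z ∈ S, ‖f' z - f' x‖ ≤ L * ‖z - x‖) {y : ι → E} (hyS : ∀ j, y j ∈ S)
    (hy : ∀ j, y j ≠ x) :
    f' x ∈ slopePolyhedron (fun j ↦ ‖y j - x‖⁻¹ • (y j - x))
      (fun j ↦ (f (y j) - f x) / ‖y j - x‖) (fun j ↦ L / 2 * ‖y j - x‖) := by
  intro j
  have hpos : 0 < ‖y j - x‖ := norm_sub_pos_iff.2 (hy j)
  calc |⟪‖y j - x‖⁻¹ • (y j - x), f' x⟫ - (f (y j) - f x) / ‖y j - x‖|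
      = |f (y j) - f x - ⟪f' x, y j - x⟫| / ‖y j - x‖ := by
        rw [real_inner_smul_left, real_inner_comm, abs_sub_comm, inv_mul_eq_div, ← sub_div,
          abs_div, abs_norm]
    _ ≤ L / 2 * ‖y j - x‖ ^ 2 / ‖y j - x‖ := by
        gcongr
        exact abs_sub_sub_inner_gradient_le_of_starConvex hS hf hLip (hyS j)
    _ = L / 2 * ‖y j - x‖ := by field_simp

theorem stmt15_general [Fintype ι] {σ : ℝ} (hσ : 0 < σ) (hS : StarConvex ℝ x S)
    (hf : ∀ z ∈ S, HasGradientWithinAt f (f' z) S z)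
    (hLip : ∀ z ∈ S, ‖f' z - f' x‖ ≤ L * ‖z - x‖) {y : ι → E} (hyS : ∀ j, y j ∈ S)
    (hy : ∀ j, y j ≠ x)
    (hA : ∀ z, σ * ‖z‖ ≤ √(∑ j, ⟪‖y j - x‖⁻¹ • (y j - x), z⟫ ^ 2)) (g : E) :
    ‖g - f' x‖ ≤
      √(∑ j, (|(f (y j) - f x) / ‖y j - x‖ - ⟪g, ‖y j - x‖⁻¹ • (y j - x)⟫|
        + L / 2 * ‖y j - x‖) ^ 2) / σ :=
  norm_sub_le_slopeResidual_div hσ hA (gradient_mem_slopePolyhedron hS hf hLip hyS hy) g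

end GradientError

/-- gradient estimation error bound: if the matrix `A` with
rows `vⱼᵀ = (yⱼ − x)ᵀ/‖yⱼ − x‖` has smallest singular value at least `σ`
(i.e. `σ‖z‖ ≤ ‖Az‖ = (Σⱼ ⟪vⱼ, z⟫²)^{1/2}` for all `z`), then for any
candidate gradient `g`, `‖g − ∇f(x)‖ ≤ m(g)/σ`. -/
theorem stmt15 (d m : ℕ) (hd : 1 ≤ d)
    (f : EuclideanSpace ℝ (Fin d) → ℝ) (L σ : ℝ) (hσ : 0 < σ)
    (hf : ContDiff ℝ 1 f)
    (hLip : ∀ x y, ‖gradient f x - gradient f y‖ ≤ L * ‖x - y‖)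
    (x : EuclideanSpace ℝ (Fin d)) (y : Fin m → EuclideanSpace ℝ (Fin d))
    (hy : ∀ j, y j ≠ x)
    (hA : ∀ z : EuclideanSpace ℝ (Fin d),
      σ * ‖z‖ ≤ Real.sqrt (∑ j, ⟪‖y j - x‖⁻¹ • (y j - x), z⟫^2))
    (g : EuclideanSpace ℝ (Fin d)) :
    ‖g - gradient f x‖ ≤
      Real.sqrt (∑ j,
        (|(f (y j) - f x) / ‖y j - x‖ - ⟪g, ‖y j - x‖⁻¹ • (y j - x)⟫|
          + (L/2) * ‖y j - x‖)^2) / σ :=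
  stmt15_general hσ (starConvex_univ x)
    (fun z _ ↦ hasGradientWithinAt_univ.2 (hf.differentiable one_ne_zero z).hasGradientAt)
    (fun z _ ↦ hLip z x) (fun _ ↦ Set.mem_univ _) hy hA g
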